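/- Let k be a field of characteristic p > 2 and let a ∈ k ∖ k^p. Let S be the set of pairs (g₁, g₂) of p-polynomials in k[X,Y], each of degree strictly less than p² in the variable X, such that g₁^p − g₁ + a·g₂^p lies in the ideal of k[X,Y] generated by X^{p²} − X + a·Y^{p²}. Then the map sending (d,e) to the pair (d^p·X + d·X^p, e·X + d·Y^p) is a bijection from the set W(k) := {(d,e) ∈ k² : d = d^{p²} + a·e^p} onto S. -/

import Mathlib

open MvPolynomial

/-- A `p`-polynomial over a field `k` is a polynomial in `k[X,Y]` that is a `k`-linear
combination of the monomials `X ^ p ^ j` and `Y ^ p ^ j`. -/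
def IsPPolynomial {k : Type*} [CommRing k] (p : ℕ) {n : ℕ}
    (F : MvPolynomial (Fin n) k) : Prop :=
  F ∈ Submodule.span k {g : MvPolynomial (Fin n) k | ∃ i : Fin n, ∃ j : ℕ, g = X i ^ p ^ j}

/-!
Split a `p`-polynomial of `X`-degree `< p ^ 2` as `α X + β X ^ p + f` with `f` free of `X`. Dividing
`g₁ ^ p - g₁ + a g₂ ^ p` by the equation of `V` leaves a remainder of `X`-degree `< p ^ 2`; its
`X`-part expresses `α`, `β` through the other coefficients, and its `Y`-part is an equation
`f ^ p - f + a h ^ p = a u ^ p + a ^ 2 v ^ p`. Since `1, a, a ^ 2` are linearly independent over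
`k ^ p` when `p > 2`, no leading terms cancel in `f ^ p + a (h - u) ^ p - a ^ 2 v ^ p = f`, so
comparing degrees gives `f = 0`, `h = u` and `v = 0`.
-/

section PthPowers

theorem coeff_smul_sum_C_mul_pow {R ι σ : Type*} [CommSemiring R] {p : ℕ} [Fact p.Prime]
    [CharP R p] [Fintype ι] (c : ι → R) (f : ι → MvPolynomial σ R) (m : σ →₀ ℕ) :
    coeff (p • m) (∑ i, C (c i) * f i ^ p) = ∑ i, c i * coeff m (f i) ^ p := by
  simp [coeff_sum, ← map_frobenius_expand p, coeff_map, coeff_expand_smul p (NeZero.ne p),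
    frobenius_def]

variable {k : Type*} [Field k] {p : ℕ} [Fact p.Prime] [CharP k p]

theorem linearIndependent_pow_of_forall_pow_ne {a : k} (ha : ∀ b : k, b ^ p ≠ a) :
    LinearIndependent (frobenius k p).fieldRange fun i : Fin p => a ^ (i : ℕ) := by
  let K := (frobenius k p).fieldRange
  let aPow : K := ⟨a ^ p, a, rfl⟩
  have hirr : Irreducible (Polynomial.X ^ p - Polynomial.C aPow) := by
    refine X_pow_sub_C_irreducible_of_prime Fact.out ?_
    rintro ⟨_, b, rfl⟩ hb
    exact ha b (frobenius_inj k p (congrArg Subtype.val hb))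
  have hminpoly : Polynomial.X ^ p - Polynomial.C aPow = minpoly K a :=
    minpoly.eq_of_irreducible_of_monic hirr (by simp [aPow, Algebra.algebraMap_ofSubsemiring_apply])
      (Polynomial.monic_X_pow_sub_C _ (NeZero.ne p))
  have hdegree : (minpoly K a).natDegree = p := by
    rw [← hminpoly, Polynomial.natDegree_X_pow_sub_C]
  exact (linearIndependent_pow a).comp (Fin.cast hdegree.symm) (Fin.cast_injective _)

variable {ι σ : Type*} [Fintype ι] {c : ι → k}

theorem eq_zero_of_sum_mul_pow_eq_zero (hc : LinearIndependent (frobenius k p).fieldRange c)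
    {x : ι → k} (hx : ∑ i, c i * x i ^ p = 0) : x = 0 := by
  funext i
  have h := Fintype.linearIndependent_iff.1 hc (fun i => ⟨x i ^ p, x i, rfl⟩)
    (by simpa [Subfield.smul_def, mul_comm] using hx) i
  exact eq_zero_of_pow_eq_zero (congrArg Subtype.val h)

theorem eq_zero_of_sum_C_mul_pow_eq (hc : LinearIndependent (frobenius k p).fieldRange c)
    {f : ι → MvPolynomial σ k} {j : ι} (hj : constantCoeff (f j) = 0)
    (h : ∑ i, C (c i) * f i ^ p = f j) : f = 0 := by
  have hcoeff (m : σ →₀ ℕ) (hm : coeff (p • m) (f j) = 0) (i : ι) : coeff m (f i) = 0 := by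
    rw [← h, coeff_smul_sum_C_mul_pow] at hm
    exact congrFun (eq_zero_of_sum_mul_pow_eq_zero hc hm) i
  have hfj : f j = 0 := by
    by_contra hne
    obtain ⟨m, hm, hmax⟩ := (f j).support.exists_max_image Finsupp.degree (support_nonempty.2 hne)
    have hpm : p • m ∈ (f j).support :=
      mem_support_iff.2 fun h0 => mem_support_iff.1 hm (hcoeff m h0 j)
    have hdegree : p * m.degree ≤ m.degree := by simpa using hmax _ hpm
    have hm0 : m.degree = 0 := by
      have := (Fact.out : p.Prime).two_le
      nlinarith
    rw [Finsupp.degree_eq_zero_iff] at hm0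
    exact mem_support_iff.1 hm (by rw [hm0, ← constantCoeff_eq, hj])
  funext i
  ext m
  exact hcoeff m (by rw [hfj, coeff_zero]) i

theorem eq_of_pow_sub_add_C_mul_pow_eq (hp : 2 < p) {a : k} (ha : ∀ b : k, b ^ p ≠ a)
    {f g u v : MvPolynomial σ k} (hf : constantCoeff f = 0)
    (h : f ^ p - f + C a * g ^ p = C a * u ^ p + C (a ^ 2) * v ^ p) :
    f = 0 ∧ g = u ∧ v = 0 := by
  have hindep : LinearIndependent (frobenius k p).fieldRange fun i : Fin 3 => a ^ (i : ℕ) :=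
    (linearIndependent_pow_of_forall_pow_ne ha).comp (Fin.castLE hp) (Fin.castLE_injective hp)
  -- `0 - v` instead of `-v` lets `sub_pow_char` take care of the sign.
  have hsum : ∑ i : Fin 3, C (a ^ (i : ℕ)) * (![f, g - u, 0 - v] i) ^ p = f := by
    simp only [Fin.sum_univ_three, Matrix.cons_val, sub_pow_char, zero_pow (NeZero.ne p),
      Fin.coe_ofNat_eq_mod, Nat.reduceMod, pow_zero, pow_one, C_1]
    linear_combination h
  have hzero := eq_zero_of_sum_C_mul_pow_eq (j := 0) hindep hf hsum
  exact ⟨congrFun hzero 0, sub_eq_zero.1 (congrFun hzero 1), by simpa using congrFun hzero 2⟩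

end PthPowers

section DegreeOf

variable {R σ : Type*} [CommSemiring R] {p : ℕ}

theorem coeff_single_eq_zero_of_degreeOf_lt {F : MvPolynomial σ R} {i : σ} {m : ℕ}
    (h : F.degreeOf i < m) : coeff (Finsupp.single i m) F = 0 := by
  by_contra hne
  have := monomial_le_degreeOf i (mem_support_iff.2 hne)
  rw [Finsupp.single_eq_same] at this
  lia

theorem eq_zero_of_dvd_of_degreeOf_lt [NoZeroDivisors R] {F G : MvPolynomial σ R} {i : σ}
    (hdvd : F ∣ G) (hlt : G.degreeOf i < F.degreeOf i) : G = 0 := by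
  obtain ⟨Q, rfl⟩ := hdvd
  by_contra hne
  rw [degreeOf_mul_eq (left_ne_zero_of_mul hne) (right_ne_zero_of_mul hne)] at hlt
  lia

theorem mem_supported_compl_singleton_iff {i : σ} {F : MvPolynomial σ R} :
    F ∈ supported R {i}ᶜ ↔ F.degreeOf i = 0 := by
  rw [mem_supported, Set.subset_compl_singleton_iff, Finset.mem_coe,
    mem_vars_iff_degreeOf_ne_zero, not_not]

theorem degreeOf_C_mul_X_add_C_mul_X_pow_lt [Nontrivial R] (hp : 1 < p) (u v : R) (i j l : σ) :
    (C u * X i + C v * X j ^ p).degreeOf l < p ^ 2 := by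
  classical
  have hp2 : p < p ^ 2 := by nlinarith
  refine (degreeOf_add_le _ _ _).trans_lt (max_lt ?_ ?_)
  · refine (degreeOf_C_mul_le _ _ _).trans_lt ?_
    rw [degreeOf_X]
    split_ifs <;> lia
  · refine ((degreeOf_C_mul_le _ _ _).trans (degreeOf_pow_le _ _ _)).trans_lt ?_
    rw [degreeOf_X]
    split_ifs <;> lia

theorem C_mul_X_add_C_mul_X_pow_add_eq_zero_iff (hp : 1 < p) {u v : R} {i : σ}
    {T : MvPolynomial σ R} (hT : T.degreeOf i = 0) :
    C u * X i + C v * X i ^ p + T = 0 ↔ u = 0 ∧ v = 0 ∧ T = 0 := by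
  classical
  refine ⟨fun h => ?_, fun ⟨hu, hv, hT⟩ => by simp [hu, hv, hT]⟩
  have hT1 : coeff (Finsupp.single i 1) T = 0 := coeff_single_eq_zero_of_degreeOf_lt (by lia)
  have hTp : coeff (Finsupp.single i p) T = 0 := coeff_single_eq_zero_of_degreeOf_lt (by lia)
  have hinj (l m : ℕ) : Finsupp.single i l = Finsupp.single i m ↔ l = m :=
    (Finsupp.single_injective i).eq_iff
  have hu : u = 0 := by
    simpa [coeff_X_pow, coeff_X, hinj, hT1, hp.ne'] using congrArg (coeff (Finsupp.single i 1)) h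
  have hv : v = 0 := by
    simpa [coeff_X_pow, coeff_X, hinj, hTp, hp.ne] using congrArg (coeff (Finsupp.single i p)) h
  exact ⟨hu, hv, by simpa [hu, hv] using h⟩

end DegreeOf

namespace IsPPolynomial

variable {k : Type*} [CommRing k] {p n : ℕ} {F G : MvPolynomial (Fin n) k}

theorem X_pow (i : Fin n) (j : ℕ) : IsPPolynomial p (X i ^ p ^ j : MvPolynomial (Fin n) k) :=
  Submodule.subset_span ⟨i, j, rfl⟩

protected theorem add (hF : IsPPolynomial p F) (hG : IsPPolynomial p G) : IsPPolynomial p (F + G) :=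
  Submodule.add_mem _ hF hG

theorem C_mul (c : k) (hF : IsPPolynomial p F) : IsPPolynomial p (C c * F) := by
  rw [C_mul']
  exact Submodule.smul_mem _ c hF

theorem C_mul_X_add_C_mul_X_pow (u v : k) (i j : Fin n) :
    IsPPolynomial p (C u * X i + C v * X j ^ p) := by
  simpa using ((X_pow (p := p) i 0).C_mul u).add ((X_pow (p := p) j 1).C_mul v)

theorem exists_eq_single (hF : IsPPolynomial p F) {m : Fin n →₀ ℕ} (hm : m ∈ F.support) :
    ∃ i j, m = Finsupp.single i (p ^ j) := by
  suffices h : F ∈ restrictSupport k {m : Fin n →₀ ℕ | ∃ i j, m = Finsupp.single i (p ^ j)} from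
    h hm
  refine Submodule.span_le.2 ?_ hF
  rintro _ ⟨i, j, rfl⟩
  rw [X_pow_eq_monomial]
  exact (monomial_mem_restrictSupport k).2 (.inl ⟨i, j, rfl⟩)

theorem constantCoeff_eq_zero (hp : p ≠ 0) (hF : IsPPolynomial p F) : constantCoeff F = 0 := by
  by_contra h
  obtain ⟨i, j, hij⟩ := hF.exists_eq_single (mem_support_iff.2 h)
  exact pow_ne_zero j hp (Finsupp.single_eq_zero.1 hij.symm)

theorem degreeOf_eq_zero (hF : IsPPolynomial p F) {i : Fin n}
    (h : ∀ j, coeff (Finsupp.single i (p ^ j)) F = 0) : F.degreeOf i = 0 := by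
  rw [← Nat.lt_one_iff, degreeOf_lt_iff one_pos]
  intro m hm
  obtain ⟨l, j, rfl⟩ := hF.exists_eq_single hm
  have hl : l ≠ i := by
    rintro rfl
    exact mem_support_iff.1 hm (h j)
  simp [Finsupp.single_eq_of_ne' hl]

theorem exists_eq_sum_add (hp : 1 < p) (hF : IsPPolynomial p F) {i : Fin n} {r : ℕ}
    (hr : F.degreeOf i < p ^ r) :
    ∃ (c : ℕ → k) (G : MvPolynomial (Fin n) k), IsPPolynomial p G ∧ G.degreeOf i = 0 ∧
      F = ∑ j ∈ Finset.range r, C (c j) * X i ^ p ^ j + G := by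
  let c (j : ℕ) : k := coeff (Finsupp.single i (p ^ j)) F
  let S : MvPolynomial (Fin n) k := ∑ j ∈ Finset.range r, C (c j) * X i ^ p ^ j
  have hG : IsPPolynomial p (F - S) :=
    Submodule.sub_mem _ hF (Submodule.sum_mem _ fun j _ => (X_pow i j).C_mul (c j))
  refine ⟨c, F - S, hG, hG.degreeOf_eq_zero fun j => ?_, (add_sub_cancel S F).symm⟩
  have hS : coeff (Finsupp.single i (p ^ j)) S = if j < r then c j else 0 := by
    simp [S, coeff_sum, coeff_X_pow, (Finsupp.single_injective i).eq_iff, Nat.pow_right_inj hp]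
  rw [coeff_sub, hS]
  split_ifs with hj
  · exact sub_self _
  · rw [sub_zero]
    exact coeff_single_eq_zero_of_degreeOf_lt
      (hr.trans_le (Nat.pow_le_pow_right hp.le (not_lt.1 hj)))

end IsPPolynomial

/-- The equation `X ^ p ^ 2 - X + a * Y ^ p ^ 2` of the group `V`, with `X = X 0` and `Y = X 1`. -/
noncomputable def polyV {k : Type*} [CommRing k] (p : ℕ) (a : k) : MvPolynomial (Fin 2) k :=
  X 0 ^ p ^ 2 - X 0 + C a * X 1 ^ p ^ 2

/-- The homomorphism `b((d, e), -) : V → U`, as the pair of its coordinate polynomials. -/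
noncomputable def pairing {k : Type*} [CommRing k] (p : ℕ) (de : k × k) :
    MvPolynomial (Fin 2) k × MvPolynomial (Fin 2) k :=
  (C (de.1 ^ p) * X 0 + C de.1 * X 0 ^ p, C de.2 * X 0 + C de.1 * X 1 ^ p)

theorem degreeOf_polyV {k : Type*} [CommRing k] [Nontrivial k] {p : ℕ} (hp : 1 < p) (a : k) :
    (polyV p a).degreeOf 0 = p ^ 2 := by
  have hlt : (C a * X 1 ^ p ^ 2 - X 0 : MvPolynomial (Fin 2) k).degreeOf 0 < p ^ 2 := by
    refine (degreeOf_sub_le _ _ _).trans_lt (max_lt ?_ ?_)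
    · refine (degreeOf_C_mul_le _ _ _).trans_lt ?_
      rw [degreeOf_X_pow_of_ne _ zero_ne_one]
      positivity
    · rw [degreeOf_X_self]
      exact Nat.one_lt_pow two_ne_zero hp
  rw [polyV, sub_add_eq_add_sub, add_sub_assoc, degreeOf_add_eq_of_degreeOf_lt, degreeOf_X_self_pow]
  rwa [degreeOf_X_self_pow]

theorem pairing_injective {k : Type*} [CommRing k] {p : ℕ} (hp : p ≠ 0) :
    Function.Injective (pairing (k := k) p) := by
  intro de de' h
  have hd := congrArg (fun g => coeff (Finsupp.single 1 p) g.2) h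
  have he := congrArg (fun g => coeff (Finsupp.single 0 1) g.2) h
  refine Prod.ext ?_ ?_
  · simpa [pairing, coeff_X_pow, coeff_X, Finsupp.single_eq_single_iff, hp] using hd
  · simpa [pairing, coeff_X_pow, coeff_X, Finsupp.single_eq_single_iff, hp] using he

section Division

variable {k : Type*} [CommRing k] {p : ℕ} [Fact p.Prime] [CharP k p]

theorem pow_sub_add_C_mul_pow_eq_C_mul_polyV_add (a α β γ δ : k) (f h : MvPolynomial (Fin 2) k) :
    (C α * X 0 + C β * X 0 ^ p + f) ^ p - (C α * X 0 + C β * X 0 ^ p + f) +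
        C a * (C γ * X 0 + C δ * X 0 ^ p + h) ^ p =
      C (β ^ p + a * δ ^ p) * polyV p a +
        (C (β ^ p + a * δ ^ p - α) * X 0 + C (α ^ p + a * γ ^ p - β) * X 0 ^ p +
          (f ^ p - f + C a * h ^ p -
            (C a * (C β * X 1 ^ p) ^ p + C (a ^ 2) * (C δ * X 1 ^ p) ^ p))) := by
  simp only [polyV, add_pow_char, mul_pow, map_add, map_sub, map_mul, map_pow, ← pow_mul, ← sq]
  ring

theorem polyV_dvd_iff [IsDomain k] {a α β γ δ : k} {f h : MvPolynomial (Fin 2) k}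
    (hf : f.degreeOf 0 = 0) (hh : h.degreeOf 0 = 0) :
    polyV p a ∣ (C α * X 0 + C β * X 0 ^ p + f) ^ p - (C α * X 0 + C β * X 0 ^ p + f) +
        C a * (C γ * X 0 + C δ * X 0 ^ p + h) ^ p ↔
      β ^ p + a * δ ^ p = α ∧ α ^ p + a * γ ^ p = β ∧
        f ^ p - f + C a * h ^ p = C a * (C β * X 1 ^ p) ^ p + C (a ^ 2) * (C δ * X 1 ^ p) ^ p := by
  have hp : 1 < p := (Fact.out : p.Prime).one_lt
  rw [pow_sub_add_C_mul_pow_eq_C_mul_polyV_add, dvd_add_right (dvd_mul_left _ _)]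
  set T := f ^ p - f + C a * h ^ p -
    (C a * (C β * X 1 ^ p) ^ p + C (a ^ 2) * (C δ * X 1 ^ p) ^ p)
  have hT : T.degreeOf 0 = 0 := by
    rw [← mem_supported_compl_singleton_iff] at hf hh ⊢
    have hC (c : k) : C c ∈ supported k ({0}ᶜ : Set (Fin 2)) := Subalgebra.algebraMap_mem _ c
    have hX : X 1 ∈ supported k ({0}ᶜ : Set (Fin 2)) := X_mem_supported.2 one_ne_zero
    have hCX (c : k) := pow_mem (mul_mem (hC c) (pow_mem hX p)) p
    exact sub_mem (add_mem (sub_mem (pow_mem hf p) hf) (mul_mem (hC a) (pow_mem hh p)))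
      (add_mem (mul_mem (hC a) (hCX β)) (mul_mem (hC (a ^ 2)) (hCX δ)))
  have hlt (u v : k) : (C u * X 0 + C v * X 0 ^ p + T).degreeOf 0 < (polyV p a).degreeOf 0 := by
    rw [degreeOf_polyV hp]
    refine (degreeOf_add_le _ _ _).trans_lt
      (max_lt (degreeOf_C_mul_X_add_C_mul_X_pow_lt hp _ _ _ _ _) ?_)
    rw [hT]
    positivity
  calc
    _ ↔ _ = 0 := ⟨fun hdvd => eq_zero_of_dvd_of_degreeOf_lt hdvd (hlt _ _), fun h => h ▸ dvd_zero _⟩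
    _ ↔ _ := C_mul_X_add_C_mul_X_pow_add_eq_zero_iff hp hT
    _ ↔ _ := by simp only [T, sub_eq_zero]

theorem polyV_dvd_pairing [IsDomain k] {a : k} {de : k × k}
    (hde : de.1 = de.1 ^ p ^ 2 + a * de.2 ^ p) :
    polyV p a ∣ (pairing p de).1 ^ p - (pairing p de).1 + C a * (pairing p de).2 ^ p := by
  have hY : (C de.1 * X 1 ^ p : MvPolynomial (Fin 2) k).degreeOf 0 = 0 :=
    Nat.le_zero.1 ((degreeOf_C_mul_le _ _ _).trans_eq (degreeOf_X_pow_of_ne p zero_ne_one))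
  have hdvd := (polyV_dvd_iff (a := a) (α := de.1 ^ p) (β := de.1) (γ := de.2) (δ := 0)
    (degreeOf_zero 0) hY).2
    ⟨by simp [NeZero.ne p], by rw [← pow_mul, ← sq, ← hde], by simp [NeZero.ne p]⟩
  simpa [pairing] using hdvd

end Division

theorem exists_pairing_eq {k : Type*} [Field k] {p : ℕ} [Fact p.Prime] [CharP k p] (hp : 2 < p)
    {a : k} (ha : ∀ b : k, b ^ p ≠ a) {g₁ g₂ : MvPolynomial (Fin 2) k}
    (hg₁ : IsPPolynomial p g₁) (hg₂ : IsPPolynomial p g₂)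
    (hdeg₁ : g₁.degreeOf 0 < p ^ 2) (hdeg₂ : g₂.degreeOf 0 < p ^ 2)
    (hdvd : polyV p a ∣ g₁ ^ p - g₁ + C a * g₂ ^ p) :
    ∃ de : k × k, de.1 = de.1 ^ p ^ 2 + a * de.2 ^ p ∧ pairing p de = (g₁, g₂) := by
  obtain ⟨c₁, f, hf, hf0, rfl⟩ := hg₁.exists_eq_sum_add (by lia) hdeg₁
  obtain ⟨c₂, h, -, hh0, rfl⟩ := hg₂.exists_eq_sum_add (by lia) hdeg₂
  simp only [Finset.sum_range_succ, Finset.sum_range_zero, pow_zero, pow_one, zero_add] at hdvd ⊢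
  obtain ⟨hα, hβ, hY⟩ := (polyV_dvd_iff hf0 hh0).1 hdvd
  obtain ⟨rfl, rfl, hv⟩ :=
    eq_of_pow_sub_add_C_mul_pow_eq hp ha (hf.constantCoeff_eq_zero (NeZero.ne p)) hY
  have hδ : c₂ 1 = 0 := by simpa using hv
  rw [hδ, zero_pow (NeZero.ne p), mul_zero, add_zero] at hα
  refine ⟨(c₁ 1, c₂ 0), ?_, ?_⟩
  · rw [sq, pow_mul, hα, hβ]
  · simp [pairing, hα, hδ]

/-- **Computation of the Hom scheme `Hom(V, U)⁺` for `p > 2` on `k`-points.**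
Let `k` be a field of characteristic `p > 2` and `a ∈ k ∖ kᵖ`.  The set `S` of pairs
`(g₁, g₂)` of `p`-polynomials in `k[X,Y]` of `X`-degree `< p²` with
`g₁^p - g₁ + a g₂^p ∈ (X^{p²} - X + a Y^{p²})` (the homomorphisms `V → U` in normal form)
is in bijection with `W(k) = {(d,e) : d = d^{p²} + a e^p}` via
`(d, e) ↦ (dᵖ·X + d·Xᵖ, e·X + d·Yᵖ)`. -/
theorem homScheme_V_to_U_eq_W {k : Type*} [Field k] (p : ℕ) [CharP k p] (hp : 2 < p)
    (a : k) (ha : ∀ b : k, b ^ p ≠ a) :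
    Set.BijOn
      (fun de : k × k =>
        ((C (de.1 ^ p) * X 0 + C de.1 * X 0 ^ p : MvPolynomial (Fin 2) k),
         (C de.2 * X 0 + C de.1 * X 1 ^ p : MvPolynomial (Fin 2) k)))
      {de : k × k | de.1 = de.1 ^ p ^ 2 + a * de.2 ^ p}
      {g : MvPolynomial (Fin 2) k × MvPolynomial (Fin 2) k |
        IsPPolynomial p g.1 ∧ IsPPolynomial p g.2 ∧
        g.1.degreeOf 0 < p ^ 2 ∧ g.2.degreeOf 0 < p ^ 2 ∧
        g.1 ^ p - g.1 + C a * g.2 ^ p ∈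
          Ideal.span {(X 0 ^ p ^ 2 - X 0 + C a * X 1 ^ p ^ 2 : MvPolynomial (Fin 2) k)}} := by
  have hprime : p.Prime := (CharP.char_is_prime_or_zero k p).resolve_right (by lia)
  have : Fact p.Prime := ⟨hprime⟩
  have hp1 := hprime.one_lt
  refine ⟨fun de hde => ?mapsTo, (pairing_injective hprime.ne_zero).injOn, ?surjOn⟩
  case mapsTo =>
    exact ⟨.C_mul_X_add_C_mul_X_pow _ _ _ _, .C_mul_X_add_C_mul_X_pow _ _ _ _,
      degreeOf_C_mul_X_add_C_mul_X_pow_lt hp1 _ _ _ _ _,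
      degreeOf_C_mul_X_add_C_mul_X_pow_lt hp1 _ _ _ _ _,
      Ideal.mem_span_singleton.2 (polyV_dvd_pairing hde)⟩
  case surjOn =>
    rintro ⟨g₁, g₂⟩ ⟨hg₁, hg₂, hdeg₁, hdeg₂, hmem⟩
    exact exists_pairing_eq hp ha hg₁ hg₂ hdeg₁ hdeg₂ (Ideal.mem_span_singleton.1 hmem)
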